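/- Let R be a regular commutative noetherian ring (every localization R_p has finite global dimension). Then any hereditary cotorsion pair of R-modules cogenerated by a class of pure-injective modules is cogenerated by a class of pure-injective modules of finite injective dimension. -/

import Mathlib

open CategoryTheory Opposite

noncomputable section

/-- Vanishing of the `n`-th Ext group of two `R`-modules. -/
def extV (R : Type) [Ring R] (M N : ModuleCat.{0} R) (n : ℕ) : Prop :=
  Subsingleton (((_root_.Ext ℤ (ModuleCat.{0} R) n).obj (op M)).obj N)

/-- The left `Ext^1`-orthogonal class. -/
def leftPerp1 (R : Type) [Ring R] (𝒳 : Set (ModuleCat.{0} R)) : Set (ModuleCat.{0} R) :=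
  {M | ∀ X ∈ 𝒳, extV R M X 1}

/-- The right `Ext^1`-orthogonal class. -/
def rightPerp1 (R : Type) [Ring R] (𝒳 : Set (ModuleCat.{0} R)) : Set (ModuleCat.{0} R) :=
  {N | ∀ X ∈ 𝒳, extV R X N 1}

/-- `(𝒞, 𝒲)` is a cotorsion pair. -/
def IsCotorsionPair (R : Type) [Ring R] (𝒞 𝒲 : Set (ModuleCat.{0} R)) : Prop :=
  𝒞 = leftPerp1 R 𝒲 ∧ 𝒲 = rightPerp1 R 𝒞

/-- `(𝒞, 𝒲)` is a hereditary cotorsion pair. -/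
def IsHereditaryCotorsionPair (R : Type) [Ring R] (𝒞 𝒲 : Set (ModuleCat.{0} R)) : Prop :=
  IsCotorsionPair R 𝒞 𝒲 ∧ ∀ X ∈ 𝒞, ∀ Y ∈ 𝒲, ∀ i : ℕ, 1 ≤ i → extV R X Y i

/-- The class `𝒞_(i) = {M ∣ Ext^j(M, W) = 0 for all j > i and all W ∈ 𝒲}`. -/
def cotShift (R : Type) [Ring R] (𝒲 : Set (ModuleCat.{0} R)) (i : ℕ) : Set (ModuleCat.{0} R) :=
  {M | ∀ Y ∈ 𝒲, ∀ j : ℕ, i < j → extV R M Y j}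

/-- `f : A →ₗ[R] B` is a pure monomorphism. -/
def IsPureMono (R : Type) [CommRing R] {A B : Type} [AddCommGroup A] [Module R A]
    [AddCommGroup B] [Module R B] (f : A →ₗ[R] B) : Prop :=
  Function.Injective f ∧
    ∀ (Q : Type) [AddCommGroup Q] [Module R Q], Function.Injective (LinearMap.lTensor Q f)

/-- An `R`-module `N` is pure-injective if it is injective with respect to
pure monomorphisms. -/
def PureInjective (R : Type) [CommRing R] (N : Type) [AddCommGroup N] [Module R N] : Prop :=
  ∀ (A B : Type) [AddCommGroup A] [Module R A] [AddCommGroup B] [Module R B]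
    (f : A →ₗ[R] B), IsPureMono R f → ∀ g : A →ₗ[R] N, ∃ h : B →ₗ[R] N, h.comp f = g

/-- `N` has injective dimension at most `n`: all Ext-groups above degree `n` vanish. -/
def injDimLE (R : Type) [Ring R] (N : ModuleCat.{0} R) (n : ℕ) : Prop :=
  ∀ M : ModuleCat.{0} R, ∀ j : ℕ, n < j → extV R M N j

/-- The class of pure-injective `R`-modules of finite injective dimension. -/
def PIFinInj (R : Type) [CommRing R] : Set (ModuleCat.{0} R) :=
  {N | PureInjective R ↥N ∧ ∃ n : ℕ, injDimLE R N n}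

/-- The depth of a module over a commutative noetherian local ring, as the infimum of
the degrees in which `Ext(k, M)` does not vanish (`⊤` if all vanish). -/
def rdepth (A : Type) [CommRing A] [IsLocalRing A] (M : Type) [AddCommGroup M]
    [Module A M] : ℕ∞ :=
  sInf {n : ℕ∞ | ∃ i : ℕ, n = (i : ℕ∞) ∧
    ¬ extV A (ModuleCat.of A (IsLocalRing.ResidueField A)) (ModuleCat.of A M) i}

/-- The residue field `k(p)` of `R_p`, as an `R`-module. -/
abbrev resField (R : Type) [CommRing R] (p : PrimeSpectrum R) : Type :=
  LocalizedModule p.asIdeal.primeCompl (R ⧸ p.asIdeal)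

/-- `depth(R_p)`. -/
def ringDepthAt (R : Type) [CommRing R] (p : PrimeSpectrum R) : ℕ∞ :=
  rdepth (Localization.AtPrime p.asIdeal) (Localization.AtPrime p.asIdeal)

/-- `depth_{R_p}(M_p)`. -/
def depthAt (R : Type) [CommRing R] (p : PrimeSpectrum R) (M : Type) [AddCommGroup M]
    [Module R M] : ℕ∞ :=
  rdepth (Localization.AtPrime p.asIdeal) (LocalizedModule p.asIdeal.primeCompl M)

/-- `f : M →ₗ[R] E` exhibits `E` as an injective envelope of `M`: `E` is injective and
`f` is an essential monomorphism. -/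
def IsInjectiveEnvelope (R : Type) [Ring R] {M E : Type} [AddCommGroup M] [Module R M]
    [AddCommGroup E] [Module R E] (f : M →ₗ[R] E) : Prop :=
  Module.Injective R E ∧ Function.Injective f ∧
    ∀ K : Submodule R E, K ≠ ⊥ → K ⊓ LinearMap.range f ≠ ⊥

instance hasExtInst (R : Type) [Ring R] : HasExt.{0} (ModuleCat.{0} R) :=
  hasExt_of_enoughProjectives.{0} _

/-- vanishing of the modern Ext -/
def V (R : Type) [Ring R] (n : ℕ) (M N : Type) [AddCommGroup M] [Module R M]
    [AddCommGroup N] [Module R N] : Prop :=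
  Subsingleton (Abelian.Ext.{0} (ModuleCat.of R M) (ModuleCat.of R N) n)

theorem extV_iff_aux (R : Type) [Ring R] (M N : ModuleCat.{0} R) (n : ℕ)
    (P : ProjectiveResolution M) :
    extV R M N (n+1) ↔ ∀ f : P.complex.X (n+1) ⟶ N, P.complex.d (n+2) (n+1) ≫ f = 0 →
      ∃ g : P.complex.X n ⟶ N, P.complex.d (n+1) n ≫ g = f := by
  have e := P.isoExt (R := ℤ) (n+1) N
  have h1 : extV R M N (n+1) ↔
      Limits.IsZero ((P.complex.linearYonedaObj ℤ N).homology (n+1)) := by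
    rw [← e.isZero_iff, ModuleCat.isZero_iff_subsingleton]
    rfl
  rw [h1, ← HomologicalComplex.exactAt_iff_isZero_homology,
    HomologicalComplex.exactAt_iff' _ n (n+1) (n+2) (by simp) (by simp),
    ShortComplex.moduleCat_exact_iff]
  exact Iff.rfl

theorem ext_iff_aux (R : Type) [Ring R] (M N : ModuleCat.{0} R) (n : ℕ)
    (P : ProjectiveResolution M) :
    Subsingleton (Abelian.Ext.{0} M N (n+1)) ↔
    ∀ f : P.complex.X (n+1) ⟶ N, P.complex.d (n+2) (n+1) ≫ f = 0 →
      ∃ g : P.complex.X n ⟶ N, P.complex.d (n+1) n ≫ g = f := by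
  constructor
  · intro h f hf
    exact (P.extMk_eq_zero_iff f (n+2) rfl hf n rfl).1 (Subsingleton.elim _ _)
  · intro h
    refine subsingleton_of_forall_eq 0 fun α => ?_
    obtain ⟨f, hf, rfl⟩ := P.extMk_surjective α (n+2) rfl
    exact (P.extMk_eq_zero_iff f (n+2) rfl hf n rfl).2 (h f hf)

theorem extV_iff (R : Type) [Ring R] (M N : ModuleCat.{0} R) (n : ℕ) :
    extV R M N (n+1) ↔ V R (n+1) M N := by
  obtain ⟨P⟩ := (inferInstance : HasProjectiveResolution M).out
  rw [extV_iff_aux R M N n P]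
  exact (ext_iff_aux R M N n P).symm

section les
variable {R : Type} [Ring R] {A B C N : Type} [AddCommGroup A] [Module R A]
  [AddCommGroup B] [Module R B] [AddCommGroup C] [Module R C] [AddCommGroup N] [Module R N]

/-- short exact -/
structure SES (f : A →ₗ[R] B) (g : B →ₗ[R] C) : Prop where
  inj : Function.Injective f
  ex : Function.Exact f g
  surj : Function.Surjective g

theorem SES.ker {g : B →ₗ[R] C} (h : Function.Surjective g) :
    SES (LinearMap.ker g).subtype g :=
  ⟨Subtype.val_injective, LinearMap.exact_subtype_ker_map g, h⟩

/-- associated short complex -/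
def SES.sc {f : A →ₗ[R] B} {g : B →ₗ[R] C} (h : SES f g) : ShortComplex (ModuleCat.{0} R) :=
  ShortComplex.mk (ModuleCat.ofHom f) (ModuleCat.ofHom g) (by
    ext x; simpa using h.ex.apply_apply_eq_zero x)

theorem SES.se {f : A →ₗ[R] B} {g : B →ₗ[R] C} (h : SES f g) : h.sc.ShortExact :=
  ModuleCat.shortComplex_shortExact h.sc h.ex h.inj h.surj

theorem V.extend {f : A →ₗ[R] B} {g : B →ₗ[R] C} (h : SES f g) (hC : V R 1 C N)
    (φ : A →ₗ[R] N) : ∃ ψ : B →ₗ[R] N, ψ.comp f = φ := by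
  unfold V at hC
  obtain ⟨x, hx⟩ := Abelian.Ext.contravariant_sequence_exact₁ h.se (ModuleCat.of R N)
    (Abelian.Ext.mk₀ (ModuleCat.ofHom φ)) (n₁ := 1) rfl (hC.elim _ _)
  obtain ⟨ψ, rfl⟩ := (Abelian.Ext.mk₀_bijective _ _).2 x
  rw [Abelian.Ext.mk₀_comp_mk₀] at hx
  have := (Abelian.Ext.mk₀_bijective _ _).1 hx
  exact ⟨ψ.hom, congrArg ModuleCat.Hom.hom this⟩

theorem V.crit {f : A →ₗ[R] B} {g : B →ₗ[R] C} (h : SES f g) (hB : V R 1 B N)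
    (H : ∀ φ : A →ₗ[R] N, ∃ ψ : B →ₗ[R] N, ψ.comp f = φ) : V R 1 C N := by
  unfold V at *
  refine subsingleton_of_forall_eq 0 fun α => ?_
  obtain ⟨x, rfl⟩ := Abelian.Ext.contravariant_sequence_exact₃ h.se (ModuleCat.of R N) α
    (hB.elim _ _) (n₀ := 0) rfl
  obtain ⟨φ, rfl⟩ := (Abelian.Ext.mk₀_bijective _ _).2 x
  obtain ⟨ψ, hψ⟩ := H φ.hom
  obtain ⟨ψ', hψ'⟩ : ∃ ψ' : h.sc.X₂ ⟶ ModuleCat.of R N, φ = h.sc.f ≫ ψ' :=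
    ⟨ModuleCat.ofHom ψ, by ext x; exact (LinearMap.congr_fun hψ x).symm⟩
  rw [hψ', ← Abelian.Ext.mk₀_comp_mk₀, ← Abelian.Ext.comp_assoc_of_second_deg_zero]
  simp
  rfl

theorem V.ext {f : A →ₗ[R] B} {g : B →ₗ[R] C} (h : SES f g) {n : ℕ} (hA : V R n A N)
    (hC : V R n C N) : V R n B N := by
  unfold V at *
  refine subsingleton_of_forall_eq 0 fun α => ?_
  obtain ⟨x, rfl⟩ := Abelian.Ext.contravariant_sequence_exact₂ h.se (ModuleCat.of R N) α
    (hA.elim _ _)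
  have hx : x = 0 := hC.elim x 0
  rw [hx, Abelian.Ext.comp_zero]
  rfl

theorem V.ker {f : A →ₗ[R] B} {g : B →ₗ[R] C} (h : SES f g) {n : ℕ} (hB : V R n B N)
    (hC : V R (n+1) C N) : V R n A N := by
  unfold V at *
  refine subsingleton_of_forall_eq 0 fun α => ?_
  obtain ⟨x, rfl⟩ := Abelian.Ext.contravariant_sequence_exact₁ h.se (ModuleCat.of R N) α
    (n₁ := n+1) (by omega) (hC.elim _ _)
  have hx : x = 0 := hB.elim x 0
  rw [hx, Abelian.Ext.comp_zero]
  rfl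

theorem V.coker {f : A →ₗ[R] B} {g : B →ₗ[R] C} (h : SES f g) {n : ℕ} (hA : V R n A N)
    (hB : V R (n+1) B N) : V R (n+1) C N := by
  unfold V at *
  refine subsingleton_of_forall_eq 0 fun α => ?_
  obtain ⟨x, rfl⟩ := Abelian.Ext.contravariant_sequence_exact₃ h.se (ModuleCat.of R N) α
    (hB.elim _ _) (n₀ := n) (by omega)
  have hx : x = 0 := hA.elim x 0
  rw [hx, Abelian.Ext.comp_zero]
  rfl

theorem V.proj [Module.Projective R B] (n : ℕ) : V R (n+1) B N := by
  have : Projective (ModuleCat.of R B) := (IsProjective.iff_projective B).1 inferInstance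
  exact Abelian.Ext.subsingleton_of_projective _ _ _

theorem V.retract (i : A →ₗ[R] B) (r : B →ₗ[R] A) (h : r.comp i = LinearMap.id) {n : ℕ}
    (hB : V R n B N) : V R n A N := by
  unfold V at *
  refine subsingleton_of_forall_eq 0 fun α => ?_
  have : 𝟙 (ModuleCat.of R A) = ModuleCat.ofHom i ≫ ModuleCat.ofHom r := by
    ext x; exact (LinearMap.congr_fun h x).symm
  rw [← Abelian.Ext.mk₀_id_comp α, this, ← Abelian.Ext.mk₀_comp_mk₀_assoc,
    hB.elim ((Abelian.Ext.mk₀ (ModuleCat.ofHom r)).comp α (zero_add n)) 0]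
  simp

end les

section dl
variable {R : Type} [CommRing R]

theorem pure_of_locSplit {A B : Type} [AddCommGroup A] [Module R A]
    [AddCommGroup B] [Module R B] (f : A →ₗ[R] B)
    (h : ∀ s : Finset A, ∃ ρ : B →ₗ[R] A, ∀ a ∈ s, ρ (f a) = a) : IsPureMono R f := by
  classical
  refine ⟨fun x y hxy => ?_, fun Q _ _ => ?_⟩
  · obtain ⟨ρ, hρ⟩ := h {x, y}
    rw [← hρ x (by simp), ← hρ y (by simp), hxy]
  · rw [injective_iff_map_eq_zero]
    intro x hx
    obtain ⟨s, rfl⟩ := TensorProduct.exists_finset x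
    obtain ⟨ρ, hρ⟩ := h (s.image Prod.snd)
    have h2 := congrArg (LinearMap.lTensor Q ρ) hx
    rw [map_zero, map_sum, map_sum] at h2
    rw [← h2]
    refine Finset.sum_congr rfl fun i hi => ?_
    simp only [LinearMap.lTensor_tmul]
    rw [hρ _ (Finset.mem_image_of_mem _ hi)]

theorem V.pureQuot {A B C P : Type} [AddCommGroup A] [Module R A]
    [AddCommGroup B] [Module R B] [AddCommGroup C] [Module R C] [AddCommGroup P] [Module R P]
    {f : A →ₗ[R] B} {g : B →ₗ[R] C} (h : SES f g) (hf : IsPureMono R f) (hP : PureInjective R P)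
    (hB : V R 1 B P) : V R 1 C P :=
  V.crit h hB (hP A B f hf)

open DirectSum in
theorem V.directSum_aux {J : Type} [DecidableEq J] (N F : J → Type) [∀ j, AddCommGroup (N j)]
    [∀ j, Module R (N j)] [∀ j, AddCommGroup (F j)]
    [∀ j, Module R (F j)] [∀ j, Module.Projective R (F j)]
    (π : ∀ j, F j →ₗ[R] N j) (hπ : ∀ j, Function.Surjective (π j))
    (P : Type) [AddCommGroup P] [Module R P] (h : ∀ j, V R 1 (N j) P) :
    V R 1 (⨁ j, N j) P := by
  classical
  let Pi0 : (⨁ j, F j) →ₗ[R] (⨁ j, N j) := DirectSum.lmap π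
  have hPi : Function.Surjective Pi0 := (DirectSum.lmap_surjective π).2 hπ
  have hpr : Module.Projective R (⨁ j, F j) := inferInstance
  refine V.crit (SES.ker hPi) (V.proj 0) fun φ => ?_
  have key : ∀ j, ∀ x : LinearMap.ker (π j), DirectSum.lof R J F j x ∈
      LinearMap.ker Pi0 := by
    intro j x
    rw [LinearMap.mem_ker]
    simp [Pi0]
  have : ∀ j, ∃ ψ : F j →ₗ[R] P, ψ.comp (LinearMap.ker (π j)).subtype =
      φ.comp (((DirectSum.lof R J F j).comp
        (LinearMap.ker (π j)).subtype).codRestrict _ (key j)) := fun j =>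
    V.extend (SES.ker (hπ j)) (h j) _
  choose ψ hψ using this
  refine ⟨DirectSum.toModule R J P ψ, ?_⟩
  ext ⟨x, hx⟩
  have hxj : ∀ j, x j ∈ LinearMap.ker (π j) := by
    intro j
    have := congrArg (fun y => y j) hx
    simpa [Pi0, DirectSum.lmap_apply] using this
  have e1 : (⟨x, hx⟩ : LinearMap.ker Pi0) = ∑ j ∈ DFinsupp.support x,
      ⟨DirectSum.lof R J F j (x j), key j ⟨_, hxj j⟩⟩ := by
    apply Subtype.ext
    rw [AddSubmonoidClass.coe_finset_sum]
    exact (DirectSum.sum_support_of x).symm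
  rw [e1, map_sum, map_sum]
  refine Finset.sum_congr rfl fun j _ => ?_
  have := LinearMap.congr_fun (hψ j) ⟨x j, hxj j⟩
  simp at this
  simp [this]
  rfl

open DirectSum in
theorem V.directSum {J : Type} [DecidableEq J] (N : J → Type) [∀ j, AddCommGroup (N j)]
    [∀ j, Module R (N j)] (P : Type) [AddCommGroup P] [Module R P] (h : ∀ j, V R 1 (N j) P) :
    V R 1 (⨁ j, N j) P :=
  V.directSum_aux N (fun j => (N j →₀ R)) (fun j => Finsupp.linearCombination R id)
    (fun j => Finsupp.linearCombination_id_surjective R _) P h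

open DirectSum in
theorem V.dirLim {J : Type} [PartialOrder J] [IsDirectedOrder J] [Nonempty J]
    (N : J → Type) [∀ j, AddCommGroup (N j)] [∀ j, Module R (N j)]
    {L : Type} [AddCommGroup L] [Module R L]
    (φ : ∀ i j, i ≤ j → (N i →ₗ[R] N j))
    (φφ : ∀ i j k (hij : i ≤ j) (hjk : j ≤ k) x, φ j k hjk (φ i j hij x) =
      φ i k (hij.trans hjk) x)
    (g : ∀ j, N j →ₗ[R] L)
    (gφ : ∀ i j (hij : i ≤ j) x, g j (φ i j hij x) = g i x)
    (hs : ∀ l, ∃ i, ∃ x, g i x = l)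
    (hk : ∀ i x, g i x = 0 → ∃ j, ∃ h : i ≤ j, φ i j h x = 0)
    (P : Type) [AddCommGroup P] [Module R P] (hP : PureInjective R P)
    (h : ∀ j, V R 1 (N j) P) : V R 1 L P := by
  classical
  let G : (⨁ j, N j) →ₗ[R] L := DirectSum.toModule R J L g
  have hG : Function.Surjective G := by
    intro l
    obtain ⟨i, x, rfl⟩ := hs l
    exact ⟨DirectSum.lof R J N i x, by simp [G]⟩
  refine V.pureQuot (SES.ker hG) (pure_of_locSplit _ fun s => ?_) hP (V.directSum N P h)
  -- the transition maps, made total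
  let T : ∀ k : J, (⨁ j, N j) →ₗ[R] N k := fun k => DirectSum.toModule R J (N k)
    (fun j => if h : j ≤ k then φ j k h else 0)
  have hT : ∀ k j (hjk : j ≤ k) x, T k (DirectSum.lof R J N j x) = φ j k hjk x := by
    intro k j hjk x
    simp [T, hjk]
  have gT : ∀ k (x : ⨁ j, N j), (∀ j ∈ DFinsupp.support x, j ≤ k) → g k (T k x) = G x := by
    intro k x hx
    rw [← DirectSum.sum_support_of x, map_sum, map_sum, map_sum]
    refine Finset.sum_congr rfl fun j hj => ?_
    have := hT k j (hx j hj) (x j)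
    rw [DirectSum.lof_eq_of] at this
    rw [this, gφ]
    simp only [G]
    rw [← DirectSum.lof_eq_of R, DirectSum.toModule_lof]
  have φT : ∀ k k' (hk : k ≤ k') (x : ⨁ j, N j), (∀ j ∈ DFinsupp.support x, j ≤ k) →
      φ k k' hk (T k x) = T k' x := by
    intro k k' hkk x hx
    rw [← DirectSum.sum_support_of x, map_sum, map_sum, map_sum]
    refine Finset.sum_congr rfl fun j hj => ?_
    have h1 := hT k j (hx j hj) (x j)
    have h2 := hT k' j ((hx j hj).trans hkk) (x j)
    rw [DirectSum.lof_eq_of] at h1 h2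
    rw [h1, h2, φφ]
  -- a single index
  have single : ∀ x : ⨁ j, N j, G x = 0 → ∃ k, (∀ j ∈ DFinsupp.support x, j ≤ k) ∧
      ∀ k', k ≤ k' → T k' x = 0 := by
    intro x hx
    obtain ⟨k, hkx⟩ := (DFinsupp.support x).exists_le
    obtain ⟨k', hkk, h0⟩ := hk k (T k x) (by rw [gT k x hkx, hx])
    refine ⟨k', fun j hj => (hkx j hj).trans hkk, fun k'' hk'' => ?_⟩
    rw [← φT k k'' (hkk.trans hk'') x hkx, ← φφ k k' k'' hkk hk'', h0, map_zero]
  choose K hK1 hK2 using single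
  obtain ⟨k, hk'⟩ := (s.image fun z : LinearMap.ker G => K z.1 z.2).exists_le
  have hks : ∀ z ∈ s, K z.1 z.2 ≤ k := fun z hz => hk' _ (Finset.mem_image_of_mem _ hz)
  -- projection to indices ≤ k
  let pr : (⨁ j, N j) →ₗ[R] (⨁ j, N j) := DirectSum.toModule R J _
    (fun j => if j ≤ k then DirectSum.lof R J N j else 0)
  let ρ : (⨁ j, N j) →ₗ[R] (⨁ j, N j) := pr - (DirectSum.lof R J N k).comp (T k)
  have hρ : ∀ x, ρ x ∈ LinearMap.ker G := by
    have : G.comp ρ = 0 := by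
      apply DirectSum.linearMap_ext
      intro j
      ext x
      by_cases hj : j ≤ k
      · simp [ρ, pr, T, hj, G, gφ]
      · simp [ρ, pr, T, hj, G]
    intro x
    exact LinearMap.congr_fun this x
  refine ⟨ρ.codRestrict _ hρ, fun z hz => ?_⟩
  apply Subtype.ext
  have hpr : pr z.1 = z.1 := by
    conv_lhs => rw [← DirectSum.sum_support_of z.1]
    conv_rhs => rw [← DirectSum.sum_support_of z.1]
    rw [map_sum]
    refine Finset.sum_congr rfl fun j hj => ?_
    rw [← DirectSum.lof_eq_of R]
    simp [pr, (hK1 z.1 z.2 j hj).trans (hks z hz)]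
  simp [ρ, hpr, hK2 z.1 z.2 k (hks z hz)]

end dl

section loc
variable {R : Type} [CommRing R]

theorem SES.baseChange (A : Type) [CommRing A] [Algebra R A] [Module.Flat R A]
    {X Y Z : Type} [AddCommGroup X] [Module R X] [AddCommGroup Y] [Module R Y]
    [AddCommGroup Z] [Module R Z] {f : X →ₗ[R] Y} {g : Y →ₗ[R] Z} (h : SES f g) :
    SES (f.baseChange A) (g.baseChange A) :=
  ⟨Module.Flat.lTensor_preserves_injective_linearMap (M := A) f h.inj,
    Module.Flat.lTensor_exact A h.ex, LinearMap.lTensor_surjective A h.surj⟩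

theorem SES.lTensor (A : Type) [CommRing A] [Algebra R A] [Module.Flat R A]
    {X Y Z : Type} [AddCommGroup X] [Module R X] [AddCommGroup Y] [Module R Y]
    [AddCommGroup Z] [Module R Z] {f : X →ₗ[R] Y} {g : Y →ₗ[R] Z} (h : SES f g) :
    SES (f.lTensor A) (g.lTensor A) :=
  ⟨Module.Flat.lTensor_preserves_injective_linearMap (M := A) f h.inj,
    Module.Flat.lTensor_exact A h.ex, LinearMap.lTensor_surjective A h.surj⟩

/-- free cover -/
abbrev cov (R : Type) [CommRing R] (M : Type) [AddCommGroup M] [Module R M] :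
  (M →₀ R) →ₗ[R] M := Finsupp.linearCombination R id

theorem cov_surj (M : Type) [AddCommGroup M] [Module R M] : Function.Surjective (cov R M) :=
  Finsupp.linearCombination_id_surjective R M

theorem V.changeRing (A : Type) [CommRing A] [Algebra R A] [Module.Flat R A] (N : Type)
    [AddCommGroup N] [Module R N] [Module A N] [IsScalarTower R A N] (j : ℕ) :
    ∀ (M : Type) [AddCommGroup M] [Module R M], V A (j+1) (TensorProduct R A M) N →
      V R (j+1) M N := by
  induction j with
  | zero =>
    intro M _ _ h
    refine V.crit (SES.ker (cov_surj (R := R) M)) (V.proj 0) fun φ => ?_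
    obtain ⟨ψ, hψ⟩ := V.extend ((SES.ker (cov_surj (R := R) M)).baseChange A) h
      (φ.liftBaseChange A)
    refine ⟨(ψ.restrictScalars R).comp (TensorProduct.mk R A _ 1), ?_⟩
    ext x
    have := LinearMap.congr_fun hψ (TensorProduct.tmul R 1 x)
    simpa using this
  | succ j ih =>
    intro M _ _ h
    have := V.ker ((SES.ker (cov_surj (R := R) M)).baseChange A) (V.proj j) h
    exact V.coker (SES.ker (cov_surj (R := R) M)) (ih _ this) (V.proj (j+1))

/-- coinduced module -/
def HH (R A P : Type) [CommRing R] [CommRing A] [Algebra R A] [AddCommGroup P] [Module R P] :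
  Type := A →ₗ[R] P

section
variable (A P : Type) [CommRing A] [Algebra R A] [AddCommGroup P] [Module R P]

instance : AddCommGroup (HH R A P) := inferInstanceAs (AddCommGroup (A →ₗ[R] P))
instance : Module R (HH R A P) := inferInstanceAs (Module R (A →ₗ[R] P))
instance : Module A (HH R A P) where
  smul a f := LinearMap.comp (show A →ₗ[R] P from f) (LinearMap.mulLeft R a)
  one_smul f := LinearMap.ext fun x => congrArg (show A →ₗ[R] P from f) (one_mul x)
  mul_smul a b f := LinearMap.ext fun x => congrArg (show A →ₗ[R] P from f)
    (show (a * b) * x = b * (a * x) by ring)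
  smul_zero a := LinearMap.ext fun x => rfl
  smul_add a f g := LinearMap.ext fun x => rfl
  add_smul a b f := LinearMap.ext fun x =>
    (congrArg (show A →ₗ[R] P from f) (add_mul a b x)).trans (map_add _ _ _)
  zero_smul f := LinearMap.ext fun x =>
    (congrArg (show A →ₗ[R] P from f) (zero_mul x)).trans (map_zero _)
instance : IsScalarTower R A (HH R A P) where
  smul_assoc r a f := LinearMap.ext fun x =>
    (congrArg (show A →ₗ[R] P from f) (smul_mul_assoc r a x)).trans (map_smul _ _ _)

/-- adjunction -/
def adj (X : Type) [AddCommGroup X] [Module R X] (g : X →ₗ[R] HH R A P) :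
    TensorProduct R A X →ₗ[R] P :=
  TensorProduct.lift (LinearMap.flip (show X →ₗ[R] (A →ₗ[R] P) from g))

/-- adjunction, backwards -/
def adj' (X : Type) [AddCommGroup X] [Module R X] (g : TensorProduct R A X →ₗ[R] P) :
    X →ₗ[R] HH R A P :=
  show X →ₗ[R] (A →ₗ[R] P) from LinearMap.flip (TensorProduct.curry g)

variable {A P}
theorem adj_tmul (X : Type) [AddCommGroup X] [Module R X] (g : X →ₗ[R] HH R A P) (a x) :
    adj A P X g (TensorProduct.tmul R a x) = (show A →ₗ[R] P from g x) a := rfl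
theorem adj'_apply (X : Type) [AddCommGroup X] [Module R X] (g : TensorProduct R A X →ₗ[R] P)
    (a x) : (show A →ₗ[R] P from adj' A P X g x) a = g (TensorProduct.tmul R a x) := rfl

theorem ext_adj {X Y : Type} [AddCommGroup X] [Module R X] [AddCommGroup Y] [Module R Y]
    (f : X →ₗ[R] Y) (g : X →ₗ[R] HH R A P)
    (h : ∃ ψ : TensorProduct R A Y →ₗ[R] P, ψ.comp (f.lTensor A) = adj A P X g) :
    ∃ ψ : Y →ₗ[R] HH R A P, ψ.comp f = g := by
  obtain ⟨ψ, hψ⟩ := h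
  refine ⟨adj' A P Y ψ, LinearMap.ext fun x => LinearMap.ext fun a => ?_⟩
  exact LinearMap.congr_fun hψ (TensorProduct.tmul R a x)

theorem ext_adj' {X Y : Type} [AddCommGroup X] [Module R X] [AddCommGroup Y] [Module R Y]
    (f : X →ₗ[R] Y) (g : TensorProduct R A X →ₗ[R] P)
    (h : ∃ ψ : Y →ₗ[R] HH R A P, ψ.comp f = adj' A P X g) :
    ∃ ψ : TensorProduct R A Y →ₗ[R] P, ψ.comp (f.lTensor A) = g := by
  obtain ⟨ψ, hψ⟩ := h
  refine ⟨adj A P Y ψ, TensorProduct.ext' fun a x => ?_⟩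
  exact congrArg (fun k : HH R A P => (show A →ₗ[R] P from k) a) (LinearMap.congr_fun hψ x)

theorem HH.pureInj (hP : PureInjective R P) : PureInjective R (HH R A P) := by
  intro X Y _ _ _ _ f hf g
  refine ext_adj f g (hP _ _ _ ⟨hf.2 A, fun Q _ _ => ?_⟩ _)
  have h := hf.2 (TensorProduct R Q A)
  have e : LinearMap.lTensor Q (f.lTensor A) =
      ((TensorProduct.assoc R Q A Y).toLinearMap.comp (f.lTensor (TensorProduct R Q A))).comp
      (TensorProduct.assoc R Q A X).symm.toLinearMap := by
    apply TensorProduct.ext'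
    intro q z
    induction z with
    | zero => simp
    | add x y hx hy => rw [TensorProduct.tmul_add, map_add, map_add, hx, hy]
    | tmul a x => simp
  rw [e]
  simpa using h

theorem V.HH_iff_aux [Module.Flat R A] {X F M : Type} [AddCommGroup M] [Module R M]
    [AddCommGroup X] [Module R X] [AddCommGroup F] [Module R F] [Module.Projective R F]
    {f : X →ₗ[R] F} {g : F →ₗ[R] M} (s : SES f g)
    (hF : V R 1 (TensorProduct R A F) P) :
    V R 1 M (HH R A P) ↔ V R 1 (TensorProduct R A M) P := by
  constructor
  · intro h
    exact V.crit (s.lTensor A) hF fun φ => ext_adj' _ _ (V.extend s h _)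
  · intro h
    exact V.crit s (V.proj 0) fun φ => ext_adj _ _ (V.extend (s.lTensor A) h _)

theorem V.HH_iff [Module.Flat R A] {M : Type} [AddCommGroup M] [Module R M]
    (hF : V R 1 (TensorProduct R A (M →₀ R)) P) :
    V R 1 M (HH R A P) ↔ V R 1 (TensorProduct R A M) P :=
  V.HH_iff_aux (SES.ker (cov_surj (R := R) M)) hF

end

/-- product of a multiset in a submonoid -/
def tt {S : Submonoid R} (e : Multiset S) : S := e.prod

theorem tt_sub {S : Submonoid R} [DecidableEq S] {d e : Multiset S} (h : d ≤ e) :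
    tt (e - d) * tt d = tt e := by
  unfold tt; rw [← Multiset.prod_add, Multiset.sub_add_cancel h]

theorem V.localization (S : Submonoid R) {C L P : Type} [AddCommGroup C] [Module R C]
    [AddCommGroup L] [Module R L] [AddCommGroup P] [Module R P] (f : C →ₗ[R] L)
    [IsLocalizedModule S f] (hP : PureInjective R P) (h : V R 1 C P) : V R 1 L P := by
  classical
  let g : ∀ s : S, C →ₗ[R] L := fun s =>
    { toFun := fun c => IsLocalizedModule.mk' f c s
      map_add' := fun x y => IsLocalizedModule.mk'_add f x y s
      map_smul' := fun r x => IsLocalizedModule.mk'_smul f r x s }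
  refine V.dirLim (J := Multiset S) (fun _ => C)
    (fun d e _ => LinearMap.lsmul R C (tt (e - d) : S).1) ?_ (fun d => g (tt d)) ?_ ?_ ?_ P hP
    (fun _ => h)
  · intro d e k hde hek x
    simp only [LinearMap.lsmul_apply, smul_smul]
    congr 1
    rw [← Submonoid.coe_mul]
    congr 1
    unfold tt
    rw [← Multiset.prod_add, tsub_add_tsub_cancel hek hde]
  · intro d e hde x
    change IsLocalizedModule.mk' f (tt (e - d) • x) (tt e) = IsLocalizedModule.mk' f x (tt d)
    rw [← tt_sub hde, IsLocalizedModule.mk'_cancel_left]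
  · intro l
    obtain ⟨⟨c, s⟩, rfl⟩ := IsLocalizedModule.mk'_surjective S f l
    exact ⟨{s}, c, by simp [g, tt]⟩
  · intro d x hx
    have : IsLocalizedModule.mk' f x (tt d) = 0 := hx
    rw [IsLocalizedModule.mk'_eq_zero'] at this
    obtain ⟨s, hs⟩ := this
    refine ⟨d + {s}, by simp, ?_⟩
    change (tt (d + {s} - d) : S).1 • x = 0
    rw [add_tsub_cancel_left]
    unfold tt
    rw [Multiset.prod_singleton]
    exact hs

theorem V.locTensor (m : Ideal R) [m.IsPrime] {C P : Type} [AddCommGroup C] [Module R C]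
    [AddCommGroup P] [Module R P] (hP : PureInjective R P) (h : V R 1 C P) :
    V R 1 (TensorProduct R (Localization.AtPrime m) C) P :=
  have : IsLocalizedModule m.primeCompl (TensorProduct.mk R (Localization.AtPrime m) C 1) :=
    inferInstance
  V.localization m.primeCompl (TensorProduct.mk R (Localization.AtPrime m) C 1) hP h

theorem V.HHloc_iff (m : Ideal R) [m.IsPrime] {M P : Type} [AddCommGroup M] [Module R M]
    [AddCommGroup P] [Module R P] (hP : PureInjective R P) :
    V R 1 M (HH R (Localization.AtPrime m) P) ↔
    V R 1 (TensorProduct R (Localization.AtPrime m) M) P :=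
  have : Module.Flat R (Localization.AtPrime m) := IsLocalization.flat _ m.primeCompl
  V.HH_iff (V.locTensor m hP (V.proj 0))

theorem HH.finInj (m : Ideal R) [m.IsPrime] (P : Type)
    [AddCommGroup P] [Module R P] (n : ℕ) (h : ∀ (M N : ModuleCat.{0} (Localization.AtPrime m))
      (j : ℕ), n < j → extV (Localization.AtPrime m) M N j) :
    injDimLE R (ModuleCat.of R (HH R (Localization.AtPrime m) P)) n := by
  have : Module.Flat R (Localization.AtPrime m) := IsLocalization.flat _ m.primeCompl
  intro M j hj
  obtain ⟨j, rfl⟩ : ∃ i, j = i + 1 := ⟨j - 1, by omega⟩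
  rw [extV_iff]
  refine V.changeRing (Localization.AtPrime m) _ j _ ?_
  have := h (ModuleCat.of _ (TensorProduct R (Localization.AtPrime m) M))
    (ModuleCat.of _ (HH R (Localization.AtPrime m) P)) (j+1) hj
  rwa [extV_iff] at this

end loc
section glob
variable {R : Type} [CommRing R]

/-- factoring through projectives -/
def st (R : Type) [CommRing R] (M : Type) [AddCommGroup M] [Module R M] : Ideal R where
  carrier := {a | ∃ (F : Type) (_ : AddCommGroup F) (_ : Module R F) (_ : Module.Projective R F)
    (α : M →ₗ[R] F) (β : F →ₗ[R] M), ∀ x, β (α x) = a • x}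
  zero_mem' := ⟨PUnit, inferInstance, inferInstance, inferInstance, 0, 0, fun x => by simp⟩
  add_mem' := by
    rintro a b ⟨F, _, _, _, α, β, h⟩ ⟨F', _, _, _, α', β', h'⟩
    exact ⟨F × F', inferInstance, inferInstance, inferInstance, α.prod α', β.coprod β',
      fun x => by simp [h, h', add_smul]⟩
  smul_mem' := by
    rintro c a ⟨F, _, _, _, α, β, h⟩
    exact ⟨F, inferInstance, inferInstance, inferInstance, α, c • β,
      fun x => by simp [h, mul_smul]⟩

section
variable {M F : Type} [AddCommGroup M] [Module R M] [AddCommGroup F] [Module R F]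

/-- the map q -/
def qq (t : R) (ψ : F →ₗ[R] M) : M × F →ₗ[R] M :=
  t • LinearMap.fst R M F - ψ.comp (LinearMap.snd R M F)

theorem qq_apply (t : R) (ψ : F →ₗ[R] M) (x : M × F) : qq t ψ x = t • x.1 - ψ x.2 := rfl

theorem mem_qq (t : R) (ψ : F →ₗ[R] M) (x : M × F) :
    x ∈ LinearMap.ker (qq t ψ) ↔ t • x.1 = ψ x.2 := by
  rw [LinearMap.mem_ker, qq_apply, sub_eq_zero]

theorem qq_surj (t : R) (ψ : F →ₗ[R] M) (h : Function.Surjective ψ) :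
    Function.Surjective (qq t ψ) := by
  intro x
  obtain ⟨y, rfl⟩ := h x
  exact ⟨(0, -y), by simp [qq_apply]⟩

theorem st_qq1 [Module.Projective R F] (t : R) (ψ : F →ₗ[R] M) :
    t ∈ st R (LinearMap.ker (qq t ψ)) := by
  refine ⟨F, inferInstance, inferInstance, inferInstance,
    (LinearMap.snd R M F).comp (LinearMap.ker (qq t ψ)).subtype,
    (ψ.prod (t • LinearMap.id)).codRestrict _ ?_, ?_⟩
  · intro y
    rw [mem_qq]; simp
  · rintro ⟨x, hx⟩
    rw [mem_qq] at hx
    apply Subtype.ext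
    apply Prod.ext
    · exact hx.symm
    · rfl

theorem st_qq2 [Module.Projective R F] (t : R) (ψ : F →ₗ[R] M) (h : Function.Surjective ψ)
    (a : R) (ha : a ∈ st R M) : a * a ∈ st R (LinearMap.ker (qq t ψ)) := by
  obtain ⟨G, _, _, _, α, β, hβ⟩ := ha
  obtain ⟨γ, hγ⟩ := Module.projective_lifting_property ψ (t • β) h
  obtain ⟨δ, hδ⟩ := Module.projective_lifting_property ψ β h
  have hγ' : ∀ x, ψ (γ x) = t • β x := fun x => LinearMap.congr_fun hγ x
  have hδ' : ∀ x, ψ (δ x) = β x := fun x => LinearMap.congr_fun hδ x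
  refine ⟨G × F, inferInstance, inferInstance, inferInstance,
    ((α.comp (LinearMap.fst R M F)).prod
      (a • LinearMap.snd R M F - γ.comp (α.comp (LinearMap.fst R M F)))).comp
        (LinearMap.ker (qq t ψ)).subtype,
    ((a • β.comp (LinearMap.fst R G F)).prod
      (a • γ.comp (LinearMap.fst R G F) + a • LinearMap.snd R G F -
        δ.comp (α.comp (ψ.comp (LinearMap.snd R G F))))).codRestrict _ ?_, ?_⟩
  · intro y
    rw [mem_qq]
    simp [hγ', hδ', hβ, smul_comm t a]
  · rintro ⟨⟨x, y⟩, hx⟩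
    rw [mem_qq] at hx
    simp only at hx
    have h0 : ψ (a • y - γ (α x)) = 0 := by
      rw [map_sub, map_smul, hγ', hβ, ← hx, smul_comm, sub_self]
    apply Subtype.ext
    apply Prod.ext
    · simp [hβ, mul_smul]
    · change a • γ (α x) + a • (a • y - γ (α x)) - δ (α (ψ (a • y - γ (α x)))) = (a * a) • y
      rw [h0]
      simp [smul_sub, mul_smul]

end

variable (Pcl : Set (ModuleCat.{0} R))

/-- the class -/
def Cl (M : Type) [AddCommGroup M] [Module R M] : Prop := ∀ P ∈ Pcl, V R 1 M P


/-- local property -/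
def LocP (M : Type) [AddCommGroup M] [Module R M] : Prop :=
  ∀ (m : Ideal R) [m.IsMaximal], Cl Pcl (TensorProduct R (Localization.AtPrime m) M)

theorem SES.prod (M F : Type) [AddCommGroup M] [Module R M] [AddCommGroup F] [Module R F] :
    SES (LinearMap.inl R M F) (LinearMap.snd R M F) :=
  ⟨LinearMap.inl_injective, Function.Exact.inl_snd, LinearMap.snd_surjective⟩

theorem locP_qq (hPI : ∀ P ∈ Pcl, PureInjective R ↥P)
  (hker : ∀ (X Y Z : Type) [AddCommGroup X] [Module R X] [AddCommGroup Y] [Module R Y]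
    [AddCommGroup Z] [Module R Z] (f : X →ₗ[R] Y) (g : Y →ₗ[R] Z), SES f g → Cl Pcl Y →
    Cl Pcl Z → Cl Pcl X) {M F : Type} [AddCommGroup M] [Module R M] [AddCommGroup F] [Module R F]
    [Module.Projective R F] (t : R) (ψ : F →ₗ[R] M) (h : Function.Surjective ψ)
    (hM : LocP Pcl M) : LocP Pcl (LinearMap.ker (qq t ψ)) := by
  intro m _
  have : Module.Flat R (Localization.AtPrime m) := IsLocalization.flat _ m.primeCompl
  refine hker _ _ _ _ _ ((SES.ker (qq_surj t ψ h)).lTensor (Localization.AtPrime m)) ?_ (hM m)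
  intro P hP
  exact V.ext ((SES.prod M F).lTensor (Localization.AtPrime m)) (hM m P hP)
    (V.locTensor m (hPI P hP) (V.proj 0))

section tel
variable (S : Submonoid R) (M : Type) [AddCommGroup M] [Module R M]

open Classical in
/-- telescope map -/
def sig (e : Multiset S) : ((M × Multiset S) →₀ R) →ₗ[R] M :=
  Finsupp.linearCombination R (fun p => (tt (e - p.2) : S).1 • p.1)

/-- supported part -/
abbrev Fe (e : Multiset S) : Submodule R ((M × Multiset S) →₀ R) :=
  Finsupp.supported R R {p | p.2 ≤ e}

/-- supported part as a type -/
def FT (e : Multiset S) : Type := Fe S M e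

instance (e : Multiset S) : AddCommGroup (FT S M e) := Submodule.addCommGroup (Fe S M e)
instance (e : Multiset S) : Module R (FT S M e) := Submodule.module (Fe S M e)

instance (e : Multiset S) : Module.Projective R (FT S M e) :=
  Module.Projective.of_equiv (M := ({p : M × Multiset S | p.2 ≤ e} →₀ R))
    (Finsupp.supportedEquivFinsupp (M := R) (R := R) {p : M × Multiset S | p.2 ≤ e}).symm

/-- inclusion -/
def inc (e : Multiset S) : FT S M e →ₗ[R] ((M × Multiset S) →₀ R) := (Fe S M e).subtype

/-- transition inclusion -/
def inc2 (e e' : Multiset S) (h : Fe S M e ≤ Fe S M e') : FT S M e →ₗ[R] FT S M e' :=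
  Submodule.inclusion h

/-- restricted map -/
def psi (e : Multiset S) : FT S M e →ₗ[R] M := (sig S M e).comp (inc S M e)

/-- the map qq for the telescope -/
abbrev qe (e : Multiset S) : M × FT S M e →ₗ[R] M :=
  qq (M := M) (F := FT S M e) (tt e : S).1 (psi S M e)

theorem psi_surj (e : Multiset S) : Function.Surjective (psi S M e) := by
  intro n
  refine ⟨⟨Finsupp.single (n, e) 1, Finsupp.single_mem_supported R 1 (by simp)⟩, ?_⟩
  change sig S M e (Finsupp.single (n, e) 1) = n
  simp [sig, tt]

theorem sig_mono [DecidableEq S] {e e' : Multiset S} (h : e ≤ e') (y) (hy : y ∈ Fe S M e) :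
    sig S M e' y = (tt (e' - e) : S).1 • sig S M e y := by
  classical
  simp only [sig, Finsupp.linearCombination_apply, Finsupp.sum]
  rw [Finset.smul_sum]
  refine Finset.sum_congr rfl fun p hp => ?_
  have hpe : p.2 ≤ e := (Finsupp.mem_supported R y).1 hy hp
  rw [smul_comm (tt (e' - e) : S).1 (y p), smul_smul (tt (e' - e) : S).1, ← Submonoid.coe_mul]
  congr 3
  unfold tt
  rw [← Multiset.prod_add]
  congr 1
  convert (tsub_add_tsub_cancel h hpe).symm

variable {M} {L : Type} [AddCommGroup L] [Module R L] (f : M →ₗ[R] L) [IsLocalizedModule S f]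

/-- fractions with fixed denominator -/
def mkl (s : S) : M →ₗ[R] L :=
    { toFun := fun c => IsLocalizedModule.mk' f c s
      map_add' := fun x y => IsLocalizedModule.mk'_add f x y s
      map_smul' := fun r x => IsLocalizedModule.mk'_smul f r x s }

/-- limit map -/
def piL : ((M × Multiset S) →₀ R) →ₗ[R] L :=
  Finsupp.linearCombination R (fun p => IsLocalizedModule.mk' f p.1 (tt p.2))

theorem piL_eq (e : Multiset S) (y) (hy : y ∈ Fe S M e) :
    piL S f y = mkl S f (tt e) (sig S M e y) := by
  classical
  simp only [piL, sig, Finsupp.linearCombination_apply, Finsupp.sum]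
  rw [map_sum]
  refine Finset.sum_congr rfl fun p hp => ?_
  have hpe : p.2 ≤ e := (Finsupp.mem_supported R y).1 hy hp
  rw [map_smul]
  congr 1
  change _ = IsLocalizedModule.mk' f (tt (e - p.2) • p.1) (tt e)
  have := tt_sub hpe
  rw [← tt_sub hpe]
  convert (IsLocalizedModule.mk'_cancel_left f p.1 (tt (e - p.2)) (tt p.2)).symm

/-- difference map -/
def dif : M × ((M × Multiset S) →₀ R) →ₗ[R] L :=
  f.comp (LinearMap.fst R _ _) - (piL S f).comp (LinearMap.snd R _ _)

theorem dif_surj : Function.Surjective (dif S f) := by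
  intro l
  obtain ⟨⟨c, s⟩, rfl⟩ := IsLocalizedModule.mk'_surjective S f l
  refine ⟨(0, -Finsupp.single (c, {s}) 1), ?_⟩
  simp [dif, piL, tt]

theorem tel_lim {P : Type} [AddCommGroup P] [Module R P] (hP : PureInjective R P)
    (h : ∀ e : Multiset S, V R 1 (LinearMap.ker (qe S M e)) P) :
    V R 1 (LinearMap.ker (dif S f)) P := by
  classical
  have hFe : ∀ e e' : Multiset S, e ≤ e' → Fe S M e ≤ Fe S M e' := fun e e' h =>
    Finsupp.supported_mono fun p hp => le_trans hp h
  refine V.dirLim (J := Multiset S) (fun e => LinearMap.ker (qe S M e))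
    (fun e e' hee => ((LinearMap.prodMap LinearMap.id (inc2 S M e e' (hFe e e' hee))).comp
      (LinearMap.ker (qe S M e)).subtype).codRestrict _ ?_) ?_
    (fun e => ((LinearMap.prodMap LinearMap.id (inc S M e)).comp
      (LinearMap.ker (qe S M e)).subtype).codRestrict _ ?_) ?_ ?_ ?_ P hP h
  · rintro ⟨⟨x, y⟩, hx⟩
    rw [mem_qq] at hx ⊢
    change (tt e : S).1 • x = sig S M e y.1 at hx
    change (tt e' : S).1 • x = sig S M e' y.1
    rw [sig_mono S M hee y.1 y.2, ← hx, smul_smul, ← Submonoid.coe_mul, tt_sub hee]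
  · rintro i j k hij hjk ⟨⟨x, y⟩, hx⟩
    rfl
  · rintro ⟨⟨x, y⟩, hx⟩
    rw [mem_qq] at hx
    change (tt e : S).1 • x = sig S M e y.1 at hx
    change f x - piL S f y.1 = 0
    rw [piL_eq S f e y.1 y.2, ← hx, sub_eq_zero]
    exact (IsLocalizedModule.mk'_cancel f x (tt e)).symm
  · rintro i j hij ⟨⟨x, y⟩, hx⟩
    rfl
  · rintro ⟨⟨x, y⟩, hx⟩
    change f x - piL S f y = 0 at hx
    obtain ⟨e, he⟩ := (y.support.image Prod.snd).exists_le
    have hy : y ∈ Fe S M e := (Finsupp.mem_supported R y).2 fun p hp =>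
      he p.2 (Finset.mem_image_of_mem _ hp)
    rw [piL_eq S f e y hy, sub_eq_zero] at hx
    have h2 : f ((tt e : S) • x) = f (sig S M e y) := by
      have := IsLocalizedModule.mk'_cancel' f (sig S M e y) (tt e)
      rw [← this]
      change _ = (tt e) • mkl S f (tt e) (sig S M e y)
      rw [← hx, Submonoid.smul_def, map_smul, Submonoid.smul_def]
    obtain ⟨u, hu⟩ := IsLocalizedModule.exists_of_eq (S := S) (f := f) h2
    have hle : e ≤ e + {u} := by simp
    refine ⟨e + {u}, ⟨⟨x, ⟨y, hFe e _ hle hy⟩⟩, ?_⟩, rfl⟩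
    rw [mem_qq]
    change (tt (e + {u}) : S).1 • x = sig S M (e + {u}) y
    rw [sig_mono S M hle y hy, add_tsub_cancel_left]
    have h3 : tt (e + {u}) = u * tt e := by simp [tt, mul_comm]
    have h4 : tt ({u} : Multiset S) = u := by simp [tt]
    rw [h3, h4, Submonoid.coe_mul, mul_smul]
    exact hu
  · rintro i ⟨⟨x, y⟩, hx⟩ h0
    refine ⟨i, le_rfl, ?_⟩
    have h1 := congrArg (fun z => z.1) h0
    have hx0 : x = 0 := congrArg Prod.fst h1
    have hy0 : y = 0 := Subtype.ext (congrArg Prod.snd h1)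
    subst hx0 hy0
    apply Subtype.ext
    exact Prod.ext rfl (Subtype.ext rfl)

end tel

theorem local_global [IsNoetherianRing R] (hPI : ∀ P ∈ Pcl, PureInjective R ↥P)
  (hker : ∀ (X Y Z : Type) [AddCommGroup X] [Module R X] [AddCommGroup Y] [Module R Y]
    [AddCommGroup Z] [Module R Z] (f : X →ₗ[R] Y) (g : Y →ₗ[R] Z), SES f g → Cl Pcl Y →
    Cl Pcl Z → Cl Pcl X) : ∀ (I : Ideal R) (M : Type) [AddCommGroup M]
    [Module R M], (st R M).radical = I → LocP Pcl M → Cl Pcl M := by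
  intro I
  induction I using WellFoundedGT.induction with
  | ind I ih =>
  intro M _ _ hI hM
  by_cases htop : st R M = ⊤
  · have h1 : (1 : R) ∈ st R M := by rw [htop]; trivial
    obtain ⟨F, _, _, _, α, β, hβ⟩ := h1
    intro P hP
    exact V.retract α β (LinearMap.ext fun x => by simp [hβ]) (V.proj 0)
  obtain ⟨m, hm, hle⟩ := Ideal.exists_le_maximal _ htop
  have hrad : I ≤ m := by
    rw [← hI]; exact (Ideal.IsPrime.radical_le_iff inferInstance).2 hle
  have hN : ∀ e : Multiset m.primeCompl,
      Cl Pcl (LinearMap.ker (qe m.primeCompl M e)) := by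
    intro e
    refine ih _ ?_ _ rfl (locP_qq Pcl hPI hker (F := FT m.primeCompl M e) _ _ (psi_surj _ _ e) hM)
    have hmem := Ideal.le_radical (st_qq1 (F := FT m.primeCompl M e) (tt e : m.primeCompl).1 (psi m.primeCompl M e))
    refine lt_of_le_of_ne ?_ ?_
    · rw [← hI]
      refine Ideal.radical_le_radical_iff.2 fun a ha => ⟨2, ?_⟩
      rw [pow_two]
      exact st_qq2 (F := FT m.primeCompl M e) _ _ (psi_surj _ _ e) a ha
    · intro heq
      rw [← heq] at hmem
      exact (tt e : m.primeCompl).2 (hrad hmem)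
  intro P hP
  have hL := tel_lim m.primeCompl (TensorProduct.mk R (Localization.AtPrime m) M 1) (hPI P hP)
    fun e => hN e P hP
  have hMF := V.ext (SES.ker (dif_surj m.primeCompl
    (TensorProduct.mk R (Localization.AtPrime m) M 1))) hL (hM m P hP)
  exact V.retract (LinearMap.inl R M _) (LinearMap.fst R M _) (LinearMap.fst_comp_inl _ _ _) hMF

end glob
/-- over a regular commutative noetherian ring (all localizations at primes
have finite global dimension), every hereditary cotorsion pair cogenerated by a class of
pure-injective modules is cogenerated by a class of pure-injective modules of finite
injective dimension. -/
theorem stmt18 (R : Type) [CommRing R] [IsNoetherianRing R]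
    (hreg : ∀ p : PrimeSpectrum R, ∃ n : ℕ,
      ∀ (M N : ModuleCat.{0} (Localization.AtPrime p.asIdeal)) (j : ℕ), n < j →
        extV (Localization.AtPrime p.asIdeal) M N j)
    (𝒞 𝒲 Pcl : Set (ModuleCat.{0} R))
    (hpair : IsHereditaryCotorsionPair R 𝒞 𝒲)
    (hPI : ∀ P ∈ Pcl, PureInjective R ↥P)
    (hcogen : 𝒞 = leftPerp1 R Pcl) :
    ∃ Pcl' : Set (ModuleCat.{0} R), Pcl' ⊆ PIFinInj R ∧ 𝒞 = leftPerp1 R Pcl' := by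
  have hCl : ∀ M : ModuleCat.{0} R, M ∈ 𝒞 ↔ Cl Pcl M := by
    intro M
    rw [hcogen]
    exact forall₂_congr fun P _ => extV_iff R M P 0
  have hkerC : ∀ (X Y Z : Type) [AddCommGroup X] [Module R X] [AddCommGroup Y] [Module R Y]
      [AddCommGroup Z] [Module R Z] (f : X →ₗ[R] Y) (g : Y →ₗ[R] Z), SES f g → Cl Pcl Y →
      Cl Pcl Z → Cl Pcl X := by
    intro X Y Z _ _ _ _ _ _ f g h hY hZ
    have hY' := (hCl (ModuleCat.of R Y)).2 hY
    have hZ' := (hCl (ModuleCat.of R Z)).2 hZ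
    refine (hCl (ModuleCat.of R X)).1 ?_
    rw [hpair.1.1]
    intro W hW
    have h1 := (extV_iff R _ W 0).1 (hpair.2 _ hY' W hW 1 le_rfl)
    have h2 := (extV_iff R _ W 1).1 (hpair.2 _ hZ' W hW 2 (by norm_num))
    exact (extV_iff R _ W 0).2 (V.ker h h1 h2)
  refine ⟨{N | ∃ P ∈ Pcl, ∃ p : PrimeSpectrum R,
    N = ModuleCat.of R (HH R (Localization.AtPrime p.asIdeal) P)}, ?_, ?_⟩
  · rintro _ ⟨P, hP, p, rfl⟩
    obtain ⟨n, hn⟩ := hreg p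
    exact ⟨HH.pureInj (hPI P hP), n, HH.finInj p.asIdeal P n hn⟩
  · ext M
    rw [hCl]
    constructor
    · rintro hM _ ⟨P, hP, p, rfl⟩
      exact (extV_iff R _ _ 0).2 ((V.HHloc_iff p.asIdeal (hPI P hP)).2
        (V.locTensor p.asIdeal (hPI P hP) (hM P hP)))
    · intro hM
      refine local_global Pcl hPI hkerC _ M rfl ?_
      intro m hm P hP
      have := (extV_iff R _ _ 0).1 (hM _ ⟨P, hP, ⟨m, hm.isPrime⟩, rfl⟩)
      exact (V.HHloc_iff m (hPI P hP)).1 this
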